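/- For every k ≥ 1, the number of cyclic permutations of [2k] whose unique cycle is generalized up-down equals E_{2k} − (k−1) · E_{2k-1}. -/

import Mathlib

open Equiv Finset

/-- `π` is an up-down permutation of `[n]` in one-line notation (0-indexed):
`π 0 < π 1 > π 2 < π 3 > ⋯`. -/
def IsUpDownPerm {n : ℕ} (π : Equiv.Perm (Fin n)) : Prop :=
  ∀ i j : Fin n, (j : ℕ) = (i : ℕ) + 1 →
    (((i : ℕ) % 2 = 0 → π i < π j) ∧ ((i : ℕ) % 2 = 1 → π j < π i))

/-- The Euler number `E n`: the number of up-down permutations of `[n]`. -/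
noncomputable def eulerE (n : ℕ) : ℕ :=
  Nat.card {π : Equiv.Perm (Fin n) // IsUpDownPerm π}

/-- The length of the cycle of `π` containing `x` (fixed points give length `1`). -/
noncomputable def cycLen {n : ℕ} (π : Equiv.Perm (Fin n)) (x : Fin n) : ℕ :=
  Function.minimalPeriod (⇑π) x

/-- `x` is the smallest element of its cycle of `π`. -/
def IsOrbitMin {n : ℕ} (π : Equiv.Perm (Fin n)) (x : Fin n) : Prop :=
  ∀ k : ℕ, x ≤ (π ^ k) x

/-- The cyclic representation `x, π x, π² x, …` (of length `cycLen π x`) of the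
cycle of `π` containing `x` has the up-down pattern `x < π x > π² x < ⋯`. -/
def CycleUpDownAt {n : ℕ} (π : Equiv.Perm (Fin n)) (x : Fin n) : Prop :=
  ∀ i : ℕ, i + 1 < cycLen π x →
    ((i % 2 = 0 → (π ^ i) x < (π ^ (i + 1)) x) ∧
     (i % 2 = 1 → (π ^ (i + 1)) x < (π ^ i) x))

/-- `π` is cycle-up-down: every cycle, written in standard form
(starting at its smallest element), is up-down. -/
def IsCUD {n : ℕ} (π : Equiv.Perm (Fin n)) : Prop :=
  ∀ x : Fin n, IsOrbitMin π x → CycleUpDownAt π x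

/-- The number of cycles of `π` (fixed points included), counted via the
smallest elements of the cycles. -/
noncomputable def cycleCount {n : ℕ} (π : Equiv.Perm (Fin n)) : ℕ :=
  Nat.card {x : Fin n // IsOrbitMin π x}

/-- The number of cycles of `π` of even length. -/
noncomputable def evenCycleCount {n : ℕ} (π : Equiv.Perm (Fin n)) : ℕ :=
  Nat.card {x : Fin n // IsOrbitMin π x ∧ Even (cycLen π x)}

/-- The number of cycles of `π` of odd length. -/
noncomputable def oddCycleCount {n : ℕ} (π : Equiv.Perm (Fin n)) : ℕ :=
  Nat.card {x : Fin n // IsOrbitMin π x ∧ Odd (cycLen π x)}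

/-- The number of excedances of `π`. -/
noncomputable def excCount {n : ℕ} (π : Equiv.Perm (Fin n)) : ℕ :=
  Nat.card {i : Fin n // i < π i}

/-- The number of left-to-right minima of `π` (in one-line notation). -/
noncomputable def lrmCount {n : ℕ} (π : Equiv.Perm (Fin n)) : ℕ :=
  Nat.card {i : Fin n // ∀ j : Fin n, j < i → π i < π j}

/-- The number of extreme elements of `π`: entries in position `≥ 2`
(0-indexed: position `≥ 1`) that are left-to-right minima or maxima. -/
noncomputable def extrCount {n : ℕ} (π : Equiv.Perm (Fin n)) : ℕ :=
  Nat.card {i : Fin n // (i : ℕ) ≠ 0 ∧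
    ((∀ j : Fin n, j < i → π i < π j) ∨ (∀ j : Fin n, j < i → π j < π i))}

/-- Auxiliary (fuel-based) computation of the length of the `s`-driven
min/max subsequence of a list: at step `j` (0-indexed) pick the minimum of the
remaining list if `s j = true`, its maximum if `s j = false`, and continue with
the part of the list strictly to the right of the picked entry. -/
def msLenAux : ℕ → (ℕ → Bool) → List ℕ → ℕ
  | 0, _, _ => 0
  | _, _, [] => 0
  | fuel + 1, s, a :: t =>
      let l := a :: t
      let v := if s 0 then l.foldr min a else l.foldr max a
      1 + msLenAux fuel (fun i => s (i + 1)) ((l.dropWhile (· != v)).tail)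

/-- The length of the `s`-driven min/max subsequence of a list
(`s j = true` means minimum at step `j`, `s j = false` means maximum). -/
def msLen (s : ℕ → Bool) (l : List ℕ) : ℕ := msLenAux l.length s l

/-- The one-line notation of `π` as a list of natural numbers. -/
def oneLine {n : ℕ} (π : Equiv.Perm (Fin n)) : List ℕ :=
  List.ofFn fun i => ((π i : ℕ))

/-- The statistic `m_s(π)`: the length of the `s`-driven min/max subsequence
of the one-line notation of `π`. -/
def msStat {n : ℕ} (s : ℕ → Bool) (π : Equiv.Perm (Fin n)) : ℕ :=
  msLen s (oneLine π)

/-- `st π`: the length of the min-max sequence of `π` (alternately take the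
minimum, the maximum, the minimum, … of what remains to the right). -/
def stStat {n : ℕ} (π : Equiv.Perm (Fin n)) : ℕ :=
  msStat (fun i => i % 2 == 0) π

/-- `π` is a cyclic permutation: it consists of a single cycle. -/
def IsCyclicPerm {n : ℕ} (π : Equiv.Perm (Fin n)) : Prop :=
  ∀ x y : Fin n, π.SameCycle x y

/-- The number of up-down cycles of `π` having length `k`. -/
noncomputable def udLenCount {n : ℕ} (π : Equiv.Perm (Fin n)) (k : ℕ) : ℕ :=
  Nat.card {x : Fin n // IsOrbitMin π x ∧ cycLen π x = k ∧ CycleUpDownAt π x}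

/-- `ud π`: the number of up-down cycles of `π`. -/
noncomputable def udCount {n : ℕ} (π : Equiv.Perm (Fin n)) : ℕ :=
  Nat.card {x : Fin n // IsOrbitMin π x ∧ CycleUpDownAt π x}

/-- `r n`: the number of permutations of `[n]` having no up-down cycles. -/
noncomputable def noUDCyclesCount (n : ℕ) : ℕ :=
  Nat.card {π : Equiv.Perm (Fin n) // ∀ x : Fin n, IsOrbitMin π x → ¬ CycleUpDownAt π x}

theorem cyc_on {n : ℕ} {π : Equiv.Perm (Fin n)} (h : IsCyclicPerm π) :
    π.IsCycleOn ((Finset.univ : Finset (Fin n)) : Set (Fin n)) := by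
  refine ⟨?_, fun x _ y _ => h x y⟩
  simpa using π.bijective.bijOn_univ

theorem cyc_pow_eq {n : ℕ} {π : Equiv.Perm (Fin n)} (h : IsCyclicPerm π) (a : Fin n) (i : ℕ) :
    (π ^ i) a = a ↔ n ∣ i := by
  have := (cyc_on h).pow_apply_eq (Finset.mem_univ a) (n := i)
  simpa using this

theorem cyc_exists {n : ℕ} {π : Equiv.Perm (Fin n)} (h : IsCyclicPerm π) (a b : Fin n) :
    ∃ i < n, (π ^ i) a = b := by
  have := (cyc_on h).exists_pow_eq (Finset.mem_univ a) (Finset.mem_univ b)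
  simpa using this

theorem cyc_len {n : ℕ} {π : Equiv.Perm (Fin n)} (h : IsCyclicPerm π) (a : Fin n) :
    cycLen π a = n := by
  unfold cycLen
  apply Nat.dvd_antisymm
  · rw [← Function.isPeriodicPt_iff_minimalPeriod_dvd]
    have := (cyc_pow_eq h a n).2 dvd_rfl
    rwa [Equiv.Perm.coe_pow] at this
  · rw [← cyc_pow_eq h a, Equiv.Perm.coe_pow]
    exact Function.isPeriodicPt_minimalPeriod _ _

theorem cyc_nofix {m : ℕ} {π : Equiv.Perm (Fin (m+2))} (h : IsCyclicPerm π) (a : Fin (m+2)) :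
    π a ≠ a := by
  intro h1
  have := (cyc_pow_eq h a 1).1 (by simpa using h1)
  have := Nat.le_of_dvd one_pos this
  omega

def AltP {n : ℕ} (π : Equiv.Perm (Fin n)) : Prop := ∀ x, x < π x ↔ π (π x) < π x

theorem cud_iff {n : ℕ} {π : Equiv.Perm (Fin n)} (h : IsCyclicPerm π) (a : Fin n) :
    CycleUpDownAt π a ↔ ∀ i : ℕ, i + 1 < n →
    ((i % 2 = 0 → (π ^ i) a < π ((π ^ i) a)) ∧
     (i % 2 = 1 → π ((π ^ i) a) < (π ^ i) a)) := by
  unfold CycleUpDownAt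
  rw [cyc_len h]
  simp only [pow_succ', Equiv.Perm.mul_apply]

theorem alt_cud {m : ℕ} {π : Equiv.Perm (Fin (m+2))} (h : IsCyclicPerm π) (ha : AltP π)
    (a : Fin (m+2)) (h1 : a < π a) : CycleUpDownAt π a := by
  rw [cud_iff h]
  intro i _
  induction i with
  | zero => simpa using h1
  | succ i ih =>
    have ih := ih (by omega)
    rw [pow_succ', Equiv.Perm.mul_apply]
    have h2 := ha ((π ^ i) a)
    have h3 := cyc_nofix h (π ((π ^ i) a))
    have h4 := cyc_nofix h ((π ^ i) a)
    generalize (π ^ i) a = x at *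
    generalize π (π x) = z at *
    generalize π x = y at *
    constructor <;> intro h5
    · have := ih.2 (by omega)
      have h6 : ¬ z < y := fun h7 => absurd (h2.2 h7) (by order)
      order
    · have := ih.1 (by omega)
      exact h2.1 this

theorem cud_up {m : ℕ} {π : Equiv.Perm (Fin (m+2))} (h : IsCyclicPerm π)
    (a : Fin (m+2)) (h1 : CycleUpDownAt π a) : a < π a := by
  rw [cud_iff h] at h1
  simpa using (h1 0 (by omega)).1 rfl

theorem cud_alt {m k : ℕ} (hm : m + 2 = 2 * k) {π : Equiv.Perm (Fin (m+2))} (h : IsCyclicPerm π)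
    (a b : Fin (m+2)) (h1 : CycleUpDownAt π a) (hb : π b = a) (hab : a < b) : AltP π := by
  have hup := cud_up h a h1
  rw [cud_iff h] at h1
  have hlast : (π ^ (m+1)) a = b := by
    apply π.injective
    rw [hb, ← Equiv.Perm.mul_apply, ← pow_succ', cyc_pow_eq h]
  intro x
  obtain ⟨i, hi, rfl⟩ := cyc_exists h a x
  by_cases h2 : i = m + 1
  · subst h2
    rw [hlast, hb]
    constructor <;> intro h3 <;> order
  have h3 := h1 i (by omega)
  by_cases h4 : i = m
  · have h5 : π ((π ^ i) a) = b := by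
      rw [← hlast, h4, pow_succ', Equiv.Perm.mul_apply]
    rw [h5] at h3 ⊢
    rw [hb]
    exact ⟨fun _ => hab, fun _ => h3.1 (by omega)⟩
  have h5 := h1 (i+1) (by omega)
  rw [pow_succ', Equiv.Perm.mul_apply] at h5
  rcases Nat.mod_two_eq_zero_or_one i with h6 | h6
  · exact ⟨fun _ => h5.2 (by omega), fun _ => h3.1 h6⟩
  · have := h5.1 (by omega)
    have := h3.2 h6
    constructor <;> intro h3 <;> order

theorem cud_unique {m k : ℕ} (hm : m + 2 = 2 * k) {π : Equiv.Perm (Fin (m+2))}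
    (h : IsCyclicPerm π) (hna : ¬ AltP π)
    (a b : Fin (m+2)) (h1 : CycleUpDownAt π a) (h2 : CycleUpDownAt π b) : a = b := by
  have key : ∀ c, CycleUpDownAt π c → π⁻¹ c < c := by
    intro c hc
    by_contra h3
    have h4 : π (π⁻¹ c) = c := by simp
    have h5 := cyc_nofix h (π⁻¹ c)
    rw [h4] at h5
    exact hna (cud_alt hm h c (π⁻¹ c) hc h4 (by order))
  have hm0 : m ≠ 0 := by
    intro h0
    subst h0
    have h3 := key a h1
    have h4 := cud_up h a h1
    have h5 := (cyc_pow_eq h a 2).2 dvd_rfl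
    have h6 : π⁻¹ a = π a := by
      rw [Equiv.Perm.inv_eq_iff_eq, ← Equiv.Perm.mul_apply, ← pow_two, h5]
    rw [h6] at h3
    order
  have ha := key a h1
  have hb := key b h2
  have hbu := cud_up h b h2
  have hau := cud_up h a h1
  obtain ⟨i, hi, rfl⟩ := cyc_exists h a b
  have h1' := (cud_iff h a).1 h1
  have h2' := (cud_iff h _).1 h2
  rcases i with _ | i
  · simp
  exfalso
  rw [pow_succ', Equiv.Perm.mul_apply] at hb hbu h2'
  have hinv : π⁻¹ (π ((π ^ i) a)) = (π ^ i) a := by simp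
  rw [hinv] at hb
  by_cases h3 : i = m
  · have h4 : π (π ((π ^ i) a)) = a := by
      have h5 := (cyc_pow_eq h a (i + 1 + 1)).2 (by rw [h3])
      rwa [pow_succ', pow_succ', Equiv.Perm.mul_apply, Equiv.Perm.mul_apply] at h5
    have h5 := (h2' 1 (by omega)).2 rfl
    rw [pow_one, h4] at h5
    order
  · have h3 := h1' i (by omega)
    have h4 := h1' (i+1) (by omega)
    rw [pow_succ', Equiv.Perm.mul_apply] at h4
    rcases Nat.mod_two_eq_zero_or_one i with h6 | h6
    · have := h4.2 (by omega)
      order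
    · have := h3.2 h6
      order

theorem alt_count {m k : ℕ} (hm : m + 2 = 2 * k) {π : Equiv.Perm (Fin (m+2))}
    (h : IsCyclicPerm π) (ha : AltP π) : Nat.card {a // CycleUpDownAt π a} = k := by
  classical
  have h1 : Nat.card {a // CycleUpDownAt π a} = Nat.card {a // a < π a} :=
    Nat.card_congr (Equiv.subtypeEquivRight fun a => ⟨cud_up h a, alt_cud h ha a⟩)
  have h2 : Nat.card {a // a < π a} = Nat.card {a // ¬ a < π a} := by
    refine Nat.card_congr (Equiv.subtypeEquiv π fun a => ?_)
    rw [ha a]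
    have := cyc_nofix h (π a)
    constructor <;> intro h3 <;> order
  have h3 := Fintype.card_subtype_compl (fun a => a < π a)
  have h4 := Fintype.card_subtype_le (fun a => a < π a)
  rw [Nat.card_eq_fintype_card, Nat.card_eq_fintype_card] at h2
  rw [Fintype.card_fin] at h3 h4
  rw [h1, Nat.card_eq_fintype_card]
  omega

theorem fiber_count {m k : ℕ} (hm : m + 2 = 2 * k) {π : Equiv.Perm (Fin (m+2))}
    (h : IsCyclicPerm π) (he : ∃ a, CycleUpDownAt π a) [Decidable (AltP π)] :
    (Nat.card {a // CycleUpDownAt π a} : ℤ) = 1 + ((k : ℤ) - 1) * (if AltP π then 1 else 0) := by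
  split_ifs with ha
  · rw [alt_count hm h ha]; ring
  · have : Nat.card {a // CycleUpDownAt π a} = 1 := by
      rw [Nat.card_eq_one_iff_unique]
      obtain ⟨a, ha'⟩ := he
      exact ⟨⟨fun x y => Subtype.ext (cud_unique hm h ha _ _ x.2 y.2)⟩, ⟨⟨a, ha'⟩⟩⟩
    rw [this]; simp

def mkPerm {m : ℕ} (σ : Equiv.Perm (Fin (m+2))) : Equiv.Perm (Fin (m+2)) :=
  σ * finRotate (m+2) * σ⁻¹

theorem rot_pow {m : ℕ} (i : Fin (m+2)) : ((finRotate (m+2)) ^ (i : ℕ)) 0 = i := by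
  have : ∀ j : ℕ, ((finRotate (m+2)) ^ j) 0 = (Fin.ofNat (m+2) j) := by
    intro j
    induction j with
    | zero => rfl
    | succ j ih =>
      rw [pow_succ', Equiv.Perm.mul_apply, ih, finRotate_apply]
      ext
      simp [Fin.val_add]
  rw [this]
  ext
  simp [Nat.mod_eq_of_lt i.2]

theorem mkPerm_pow {m : ℕ} (σ : Equiv.Perm (Fin (m+2))) (i : Fin (m+2)) :
    ((mkPerm σ) ^ (i : ℕ)) (σ 0) = σ i := by
  unfold mkPerm
  rw [conj_pow]
  simp [rot_pow]

theorem mkPerm_cyclic {m : ℕ} (σ : Equiv.Perm (Fin (m+2))) : IsCyclicPerm (mkPerm σ) := by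
  have : ∀ x, (mkPerm σ).SameCycle (σ 0) x := by
    intro x
    refine ⟨((σ⁻¹ x : Fin (m+2)) : ℕ), ?_⟩
    rw [zpow_natCast, mkPerm_pow]
    simp
  exact fun x y => (this x).symm.trans (this y)

theorem mkPerm_cud {m : ℕ} (σ : Equiv.Perm (Fin (m+2))) :
    CycleUpDownAt (mkPerm σ) (σ 0) ↔ IsUpDownPerm σ := by
  unfold CycleUpDownAt IsUpDownPerm
  rw [cyc_len (mkPerm_cyclic σ)]
  constructor
  · intro h i j hij
    have := h i (by omega)
    rw [← hij, mkPerm_pow, mkPerm_pow] at this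
    exact this
  · intro h i hi
    have := h ⟨i, by omega⟩ ⟨i+1, hi⟩ rfl
    rw [← mkPerm_pow σ ⟨i, _⟩, ← mkPerm_pow σ ⟨i+1, _⟩] at this
    exact this

theorem mkPerm_inj {m : ℕ} (σ τ : Equiv.Perm (Fin (m+2))) (h : mkPerm σ = mkPerm τ)
    (h0 : σ 0 = τ 0) : σ = τ := by
  ext i
  rw [← mkPerm_pow σ i, ← mkPerm_pow τ i, h, h0]

theorem mkPerm_surj {m : ℕ} (π : Equiv.Perm (Fin (m+2))) (hπ : IsCyclicPerm π) (a : Fin (m+2)) :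
    ∃ σ, mkPerm σ = π ∧ σ 0 = a := by
  have hs : Function.Surjective (fun i : Fin (m+2) => (π ^ (i : ℕ)) a) := by
    intro b
    obtain ⟨i, hi, h⟩ := cyc_exists hπ a b
    exact ⟨⟨i, hi⟩, h⟩
  let σ := Equiv.ofBijective _ (Finite.surjective_iff_bijective.1 hs)
  have hσ : ∀ i, σ i = (π ^ (i : ℕ)) a := fun i => rfl
  refine ⟨σ, ?_, by simp [hσ]⟩
  unfold mkPerm
  rw [mul_inv_eq_iff_eq_mul]
  ext1 i
  rw [Equiv.Perm.mul_apply, Equiv.Perm.mul_apply, hσ, hσ, ← Equiv.Perm.mul_apply, ← pow_succ']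
  rw [finRotate_apply]
  by_cases hi : i = Fin.last _
  · subst hi
    simp [(cyc_pow_eq hπ a _).2 dvd_rfl]
  · rw [Fin.val_add_one_of_lt (Fin.lt_last_iff_ne_last.2 hi)]

theorem card_T (m : ℕ) :
    Nat.card (Σ π : {π : Equiv.Perm (Fin (m+2)) // IsCyclicPerm π ∧ ∃ a, CycleUpDownAt π a},
      {a // CycleUpDownAt π.1 a}) = eulerE (m+2) := by
  symm
  unfold eulerE
  refine Nat.card_congr (Equiv.ofBijective (fun σ =>
    ⟨⟨mkPerm σ.1, mkPerm_cyclic _, σ.1 0, (mkPerm_cud _).2 σ.2⟩, ⟨σ.1 0, (mkPerm_cud _).2 σ.2⟩⟩)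
    ⟨?_, ?_⟩)
  · intro σ τ h
    apply Subtype.ext
    have h1 := congrArg (fun t => (t.1.1, t.2.1)) h
    simp only [Prod.mk.injEq] at h1
    exact mkPerm_inj _ _ h1.1 h1.2
  · rintro ⟨⟨π, hπ, he⟩, ⟨a, ha⟩⟩
    obtain ⟨σ, rfl, rfl⟩ := mkPerm_surj π hπ a
    exact ⟨⟨σ, (mkPerm_cud _).1 ha⟩, rfl⟩

theorem mkPerm_last {m : ℕ} (σ : Equiv.Perm (Fin (m+2))) :
    mkPerm σ (σ (Fin.last _)) = σ 0 := by
  simp [mkPerm]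

theorem alt_last {m : ℕ} {π : Equiv.Perm (Fin (m+2))} (h : IsCyclicPerm π) (ha : AltP π) :
    CycleUpDownAt π (π (Fin.last _)) := by
  apply alt_cud h ha
  have h1 := ha (Fin.last _)
  have h2 := cyc_nofix h (π (Fin.last _))
  have h3 : ¬ Fin.last (m+1) < π (Fin.last _) := not_lt.2 (Fin.le_last _)
  rw [h1] at h3
  order

theorem card_A1 {m k : ℕ} (hm : m + 2 = 2 * k) :
    Nat.card {π : {π : Equiv.Perm (Fin (m+2)) // IsCyclicPerm π ∧ ∃ a, CycleUpDownAt π a} //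
      AltP π.1} =
    Nat.card {σ : Equiv.Perm (Fin (m+2)) // IsUpDownPerm σ ∧ σ (Fin.last _) = Fin.last _} := by
  symm
  refine Nat.card_congr (Equiv.ofBijective (fun σ =>
    ⟨⟨mkPerm σ.1, mkPerm_cyclic _, σ.1 0, (mkPerm_cud _).2 σ.2.1⟩, ?_⟩) ⟨?_, ?_⟩)
  · refine cud_alt hm (mkPerm_cyclic _) (σ.1 0) (σ.1 (Fin.last _)) ((mkPerm_cud _).2 σ.2.1)
      (mkPerm_last _) ?_
    rw [σ.2.2, Fin.lt_last_iff_ne_last]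
    intro h
    have := σ.1.injective (h.trans σ.2.2.symm)
    simp [Fin.ext_iff] at this
  · intro σ τ h
    apply Subtype.ext
    have h1 : mkPerm σ.1 = mkPerm τ.1 := congrArg (fun t => t.1.1) h
    refine mkPerm_inj _ _ h1 ?_
    rw [← mkPerm_last σ.1, ← mkPerm_last τ.1, σ.2.2, τ.2.2, h1]
  · rintro ⟨⟨π, hπ, he⟩, ha⟩
    have hc := alt_last hπ ha
    obtain ⟨σ, rfl, h0⟩ := mkPerm_surj π hπ (π (Fin.last _))
    rw [← h0] at hc
    refine ⟨⟨σ, (mkPerm_cud _).1 hc, ?_⟩, rfl⟩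
    rw [← mkPerm_last] at h0
    exact (mkPerm σ).injective h0

def extP {n : ℕ} (τ : Equiv.Perm (Fin n)) : Equiv.Perm (Fin (n+1)) :=
  finSuccEquivLast.symm.permCongr (optionCongr τ)

theorem extP_last {n : ℕ} (τ : Equiv.Perm (Fin n)) : extP τ (Fin.last _) = Fin.last _ := by
  simp [extP, Equiv.permCongr_apply]

theorem extP_castSucc {n : ℕ} (τ : Equiv.Perm (Fin n)) (i : Fin n) :
    extP τ i.castSucc = (τ i).castSucc := by
  simp [extP, Equiv.permCongr_apply]

theorem extP_ud {m k : ℕ} (hm : m + 2 = 2 * k) (τ : Equiv.Perm (Fin (m+1))) :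
    IsUpDownPerm (extP τ) ↔ IsUpDownPerm τ := by
  constructor
  · intro h i j hij
    have := h i.castSucc j.castSucc (by simpa using hij)
    simpa [extP_castSucc] using this
  · intro h i j hij
    induction i using Fin.lastCases with
    | last => exfalso; have := j.2; simp at hij; omega
    | cast i =>
      induction j using Fin.lastCases with
      | last =>
        rw [extP_castSucc, extP_last]
        refine ⟨fun _ => Fin.castSucc_lt_last _, fun h1 => ?_⟩
        simp at hij h1
        omega
      | cast j =>
        have := h i j (by simpa using hij)
        simpa [extP_castSucc] using this

theorem card_A2 {m k : ℕ} (hm : m + 2 = 2 * k) :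
    Nat.card {σ : Equiv.Perm (Fin (m+2)) // IsUpDownPerm σ ∧ σ (Fin.last _) = Fin.last _} =
      eulerE (m+1) := by
  symm
  unfold eulerE
  refine Nat.card_congr (Equiv.ofBijective (fun τ =>
    ⟨extP τ.1, (extP_ud hm _).2 τ.2, extP_last _⟩) ⟨?_, ?_⟩)
  · intro σ τ h
    apply Subtype.ext
    have h1 : extP σ.1 = extP τ.1 := congrArg (fun t => t.1) h
    ext1 i
    apply Fin.castSucc_injective
    rw [← extP_castSucc, ← extP_castSucc, h1]
  · rintro ⟨σ, hud, hl⟩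
    have hne : ∀ i : Fin (m+1), σ i.castSucc ≠ Fin.last _ := by
      intro i h
      have := σ.injective (h.trans hl.symm)
      exact (Fin.castSucc_lt_last i).ne this
    have hinj : Function.Injective (fun i : Fin (m+1) => (σ i.castSucc).castPred (hne i)) := by
      intro i j hij
      have := congrArg Fin.castSucc hij
      simpa using this
    let τ := Equiv.ofBijective _ (Finite.injective_iff_bijective.1 hinj)
    have hτ : ∀ i, τ i = (σ i.castSucc).castPred (hne i) := fun i => rfl
    have he : extP τ = σ := by
      ext1 i
      induction i using Fin.lastCases with
      | last => rw [extP_last, hl]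
      | cast i => rw [extP_castSucc, hτ, Fin.castSucc_castPred]
    exact ⟨⟨τ, (extP_ud hm _).1 (by rw [he]; exact hud)⟩, Subtype.ext he⟩

theorem main_count {m k : ℕ} (hm : m + 2 = 2 * k) :
    (Nat.card {π : Equiv.Perm (Fin (m+2)) //
      IsCyclicPerm π ∧ ∃ a : Fin (m+2), CycleUpDownAt π a} : ℤ) =
      eulerE (m+2) - ((k : ℤ) - 1) * eulerE (m+1) := by
  classical
  have h1 := card_T m
  have h2 := (card_A1 hm).trans (card_A2 hm)
  rw [Nat.card_sigma] at h1
  rw [← h1, ← h2]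
  push_cast
  rw [Finset.sum_congr rfl (fun π _ => fiber_count hm π.2.1 π.2.2)]
  rw [Finset.sum_add_distrib, ← Finset.mul_sum, Finset.sum_boole, ← Fintype.card_subtype]
  simp [Nat.card_eq_fintype_card]

/-- cyclic permutations of `[2k]` with a generalized up-down cycle. -/
theorem stmt7 (k : ℕ) (hk : 1 ≤ k) :
    (Nat.card {π : Equiv.Perm (Fin (2 * k)) //
      IsCyclicPerm π ∧ ∃ a : Fin (2 * k), CycleUpDownAt π a} : ℤ) =
      eulerE (2 * k) - ((k : ℤ) - 1) * eulerE (2 * k - 1) := by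
  obtain ⟨m, hm⟩ : ∃ m, m + 2 = 2 * k := ⟨2 * k - 2, by omega⟩
  have h := main_count hm
  have h1 : 2 * k - 1 = m + 1 := by omega
  rw [h1, ← hm]
  exact h
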